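/- Erdős–Kac theorem: for every real x, (1/n)·#{m : 1 ≤ m ≤ n, ω(m) - ln ln n ≤ x·√(ln ln n)} → Φ(x) as n → ∞, where Φ is the standard normal cumulative distribution function. -/

import Mathlib

open Filter MeasureTheory
open scoped Classical

/-- The standard normal cumulative distribution function. -/
noncomputable def stdNormalCDF (x : ℝ) : ℝ :=
  (Real.sqrt (2 * Real.pi))⁻¹ * ∫ t in Set.Iic x, Real.exp (-t ^ 2 / 2)


open ProbabilityTheory in
lemma ek_reduction (X : ℕ → ℕ → ℝ)
    (hchar : ∀ t : ℝ, Tendsto (fun n : ℕ => (∑ m ∈ Finset.Icc 1 n,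
      Complex.exp (t * X n m * Complex.I)) / n) atTop (nhds (Complex.exp (-t ^ 2 / 2)))) (x : ℝ) :
    Tendsto (fun n : ℕ => (((Finset.Icc 1 n).filter (fun m => X n m ≤ x)).card : ℝ) / n)
      atTop (nhds (stdNormalCDF x)) := by
  rw [← tendsto_add_atTop_iff_nat 1]
  set M : ℕ → Measure ℝ := fun n =>
    ((n + 1 : ℕ) : ENNReal)⁻¹ • ∑ m ∈ Finset.Icc 1 (n+1), Measure.dirac (X (n+1) m) with hM
  have hprob : ∀ n, IsProbabilityMeasure (M n) := by
    intro n
    constructor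
    simp only [hM, Measure.smul_apply, Measure.finsetSum_apply, measure_univ]
    simp
    apply ENNReal.inv_mul_cancel <;> simp
  have hcf : ∀ n t, charFun (M n) t = (∑ m ∈ Finset.Icc 1 (n+1),
      Complex.exp (t * X (n+1) m * Complex.I)) / ((n+1 : ℕ) : ℂ) := by
    intro n t
    rw [charFun_apply_real]
    simp only [hM]
    rw [integral_smul_measure, integral_finsetSum_measure]
    · simp only [integral_dirac]
      rw [ENNReal.toReal_inv, ENNReal.toReal_natCast, Complex.real_smul, div_eq_inv_mul]
      push_cast
      rfl
    · intro i _
      exact integrable_dirac (by simp [enorm_lt_top])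
  let G : ProbabilityMeasure ℝ := ⟨gaussianReal 0 1, inferInstance⟩
  let PM : ℕ → ProbabilityMeasure ℝ := fun n => ⟨M n, hprob n⟩
  have hlim : Tendsto PM atTop (nhds G) := by
    refine ProbabilityMeasure.tendsto_iff_tendsto_charFun.2 fun t => ?_
    have := (tendsto_add_atTop_iff_nat 1).2 (hchar t)
    simp only [PM, G, ProbabilityMeasure.coe_mk, hcf, charFun_gaussianReal]
    convert this using 2
    simp
    ring_nf
  have hfr := ProbabilityMeasure.tendsto_measure_of_null_frontier_of_tendsto' hlim (E := Set.Iic x) (by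
    simp only [G, ProbabilityMeasure.coe_mk, frontier_Iic]
    have := nullSingletonClass_gaussianReal (μ := 0) (v := 1) one_ne_zero
    exact measure_singleton x)
  simp only [PM, G, ProbabilityMeasure.coe_mk] at hfr
  rw [gaussianReal_apply_eq_integral _ one_ne_zero] at hfr
  have hfr2 := (ENNReal.tendsto_toReal ENNReal.ofReal_ne_top).comp hfr
  rw [ENNReal.toReal_ofReal (integral_nonneg fun y => gaussianPDFReal_nonneg _ _ _)] at hfr2
  convert hfr2 using 1
  · ext n
    simp only [hM, Function.comp, Measure.smul_apply, Measure.finsetSum_apply, smul_eq_mul,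
      ENNReal.toReal_mul, ENNReal.toReal_inv, ENNReal.toReal_natCast]
    rw [div_eq_inv_mul, ENNReal.toReal_sum (by intro a _; exact measure_ne_top _ _)]
    congr 1
    rw [Finset.card_filter]
    push_cast
    refine Finset.sum_congr rfl fun m _ => ?_
    rw [Measure.dirac_apply' _ measurableSet_Iic]
    by_cases h : X (n+1) m ≤ x <;> simp [h]
  · congr 1
    rw [stdNormalCDF, ← integral_const_mul]
    simp [gaussianPDFReal]

lemma ek_log_factorial (n : ℕ) : Real.log (n.factorial : ℝ) =
    ∑ p ∈ Nat.primesLE n, (n.factorial.factorization p : ℝ) * Real.log p := by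
  conv_lhs => rw [← Nat.prod_factorization_pow_eq_self (Nat.factorial_ne_zero n)]
  rw [Finsupp.prod, Nat.cast_prod, Real.log_prod]
  · have hs : n.factorial.factorization.support ⊆ Nat.primesLE n := by
      intro p hp
      rw [Nat.support_factorization, Nat.mem_primeFactors] at hp
      rw [Nat.mem_primesLE]
      exact ⟨(hp.1.dvd_factorial).1 hp.2.1, hp.1⟩
    rw [← Finset.sum_subset hs]
    · refine Finset.sum_congr rfl fun p hp => ?_
      push_cast
      rw [Real.log_pow]
    · intro p _ hp
      rw [Finsupp.notMem_support_iff] at hp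
      simp [hp]
  · intro p hp
    have := (Nat.prime_of_mem_primeFactors (by simpa using hp : p ∈ n.factorial.primeFactors)).pos
    positivity

lemma ek_fact_lower {p : ℕ} (hp : p.Prime) (n : ℕ) :
    (n : ℝ) / p - 1 ≤ n.factorial.factorization p := by
  have := Fact.mk hp
  have h2 : n / p ≤ n.factorial.factorization p := by
    have h1 : (p * (n / p)).factorial.factorization p ≤ n.factorial.factorization p :=
      (Nat.factorization_le_iff_dvd (Nat.factorial_ne_zero _) (Nat.factorial_ne_zero n)).2
        (Nat.factorial_dvd_factorial (Nat.mul_div_le n p)) p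
    rw [Nat.factorization_def _ hp, padicValNat_factorial_mul] at h1
    omega
  have h3 : (n : ℝ) / p < (n / p : ℕ) + 1 := by
    rw [← Nat.floor_div_eq_div (K := ℝ)]; exact Nat.lt_floor_add_one _
  have h4 : ((n / p : ℕ) : ℝ) ≤ n.factorial.factorization p := by exact_mod_cast h2
  linarith

lemma ek_fact_upper {p : ℕ} (hp : p.Prime) (n : ℕ) :
    (n.factorial.factorization p : ℝ) ≤ n / (p - 1) := by
  have := Fact.mk hp
  have h := sub_one_mul_padicValNat_factorial (p := p) n
  have h1 : (p - 1) * n.factorial.factorization p ≤ n := by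
    rw [Nat.factorization_def _ hp, h]; exact Nat.sub_le _ _
  have h2 : ((p : ℝ) - 1) * n.factorial.factorization p ≤ n := by
    have : ((p - 1 : ℕ) : ℝ) = p - 1 := by push_cast [hp.one_le]; ring
    rw [← this]; exact_mod_cast h1
  have : (1:ℝ) < p := by exact_mod_cast hp.one_lt
  rw [le_div_iff₀ (by linarith)]; linarith

noncomputable def ekA (n : ℕ) : ℝ := ∑ p ∈ Nat.primesLE n, Real.log p / p
noncomputable def ekS (n : ℕ) : ℝ := ∑ p ∈ Nat.primesLE n, 1 / (p : ℝ)

lemma ek_mertens1 : ∃ C : ℝ, 0 ≤ C ∧ ∀ n : ℕ, 1 ≤ n → |ekA n - Real.log n| ≤ C := by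
  -- the convergent series
  have hsum : Summable fun n : ℕ => 4 * (1 / (n : ℝ) ^ (3/2 : ℝ)) :=
    (Real.summable_one_div_nat_rpow.2 (by norm_num)).mul_left 4
  set D := ∑' n : ℕ, 4 * (1 / (n : ℝ) ^ (3/2 : ℝ)) with hD
  have hD0 : 0 ≤ D := tsum_nonneg fun n => by positivity
  refine ⟨D + 1 + Real.log 4, by positivity, fun n hn => ?_⟩
  have hn0 : (0:ℝ) < n := by exact_mod_cast hn
  have hfac := ek_log_factorial n
  have hup : Real.log (n.factorial : ℝ) ≤ n * Real.log n := by
    rw [← Real.log_pow]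
    apply Real.log_le_log (by positivity)
    exact_mod_cast Nat.factorial_le_pow n
  have hlo : n * Real.log n - n ≤ Real.log (n.factorial : ℝ) := by
    have h := Stirling.le_log_factorial_stirling (n := n) (by omega)
    have h1 : 0 ≤ Real.log n := Real.log_natCast_nonneg n
    have h2 : 0 ≤ Real.log (2 * Real.pi) := Real.log_nonneg (by nlinarith [Real.pi_gt_three])
    linarith
  have htheta : ∑ p ∈ Nat.primesLE n, Real.log p ≤ Real.log 4 * n := by
    rw [← Chebyshev.theta_eq_sum_primesLE_log]
    exact Chebyshev.theta_le_log4_mul_x (by positivity)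
  have h1 : n * ekA n - Real.log 4 * n ≤ Real.log (n.factorial : ℝ) := by
    calc n * ekA n - Real.log 4 * n ≤ n * ekA n - ∑ p ∈ Nat.primesLE n, Real.log p := by linarith
      _ = ∑ p ∈ Nat.primesLE n, ((n:ℝ)/p - 1) * Real.log p := by
        rw [ekA, Finset.mul_sum, ← Finset.sum_sub_distrib]
        exact Finset.sum_congr rfl fun p _ => by ring
      _ ≤ _ := by
        rw [hfac]
        exact Finset.sum_le_sum fun p hp => mul_le_mul_of_nonneg_right
          (ek_fact_lower (Nat.prime_of_mem_primesLE hp) n) (Real.log_natCast_nonneg p)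
  have h2 : Real.log (n.factorial : ℝ) ≤ n * ekA n + n * D := by
    calc Real.log (n.factorial : ℝ) ≤ ∑ p ∈ Nat.primesLE n, ((n:ℝ)/(p-1)) * Real.log p := by
          rw [hfac]
          exact Finset.sum_le_sum fun p hp => mul_le_mul_of_nonneg_right
            (ek_fact_upper (Nat.prime_of_mem_primesLE hp) n) (Real.log_natCast_nonneg p)
      _ ≤ ∑ p ∈ Nat.primesLE n, (n * (Real.log p / p) + n * (4 * (1 / (p : ℝ) ^ (3/2 : ℝ)))) := by
          refine Finset.sum_le_sum fun p hp => ?_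
          have hp2 : (2:ℝ) ≤ p := by exact_mod_cast Nat.two_le_of_mem_primesLE hp
          have hp0 : (0:ℝ) < p := by linarith
          have hl : Real.log p ≤ (p:ℝ) ^ (1/2:ℝ) / (1/2) :=
            Real.log_le_rpow_div (by linarith) (by norm_num)
          have hl0 : 0 ≤ Real.log p := Real.log_natCast_nonneg p
          have e1 : (n:ℝ)/(p-1) * Real.log p =
            n * (Real.log p / p) + n * (Real.log p * (1 / (p * (p - 1)))) := by
            have : (p:ℝ) - 1 ≠ 0 := by linarith
            field_simp; ring
          rw [e1]
          have e2 : (p:ℝ) ^ (3/2:ℝ) * (p:ℝ) ^ (1/2:ℝ) = p ^ 2 := by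
            rw [← Real.rpow_add hp0, ← Real.rpow_natCast]; norm_num
          have e3 : Real.log p * (1 / (p * (p - 1))) ≤ 4 * (1 / (p : ℝ) ^ (3/2 : ℝ)) := by
            have h3 : 0 < (p : ℝ) ^ (3/2 : ℝ) := by positivity
            have h4 : (0:ℝ) < p * (p - 1) := by apply mul_pos <;> linarith
            rw [mul_one_div, mul_one_div, div_le_div_iff₀ h4 h3]
            calc Real.log p * (p : ℝ) ^ (3/2 : ℝ) ≤ ((p:ℝ) ^ (1/2:ℝ) / (1/2)) * (p : ℝ) ^ (3/2 : ℝ) := by gcongr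
              _ = 2 * p ^ 2 := by rw [← e2]; ring
              _ ≤ _ := by nlinarith
          gcongr
      _ = n * ekA n + n * ∑ p ∈ Nat.primesLE n, (4 * (1 / (p : ℝ) ^ (3/2 : ℝ))) := by
          rw [Finset.sum_add_distrib, ekA, Finset.mul_sum, Finset.mul_sum]
      _ ≤ _ := by
          gcongr
          exact hsum.sum_le_tsum _ (fun i _ => by positivity)
  have h4 : 0 ≤ Real.log 4 := Real.log_nonneg (by norm_num)
  rw [abs_le]
  constructor
  · have : n * (Real.log n - 1 - D - ekA n) ≤ 0 := by nlinarith
    have := nonpos_of_mul_nonpos_right this hn0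
    linarith
  · have : n * (ekA n - Real.log 4 - Real.log n) ≤ 0 := by nlinarith
    have := nonpos_of_mul_nonpos_right this hn0
    linarith

lemma ek_step (m : ℕ) (hm : 2 ≤ m) :
    ekS (m+1) - ekS m = (ekA (m+1) - ekA m) / Real.log ((m+1 : ℕ) : ℝ) := by
  have hl : 0 < Real.log ((m+1 : ℕ) : ℝ) := Real.log_pos (by exact_mod_cast (by omega))
  unfold ekS ekA
  rw [Nat.primesLE_succ]
  split_ifs with h
  · rw [Finset.sum_insert (Nat.notMem_primesLE m), Finset.sum_insert (Nat.notMem_primesLE m)]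
    field_simp
    ring
  · simp

lemma ek_mertens2 : ∃ C : ℝ, 0 ≤ C ∧ ∀ n : ℕ, 2 ≤ n → |ekS n - Real.log (Real.log n)| ≤ C := by
  obtain ⟨C, hC, hA⟩ := ek_mertens1
  set B : ℕ → ℝ := fun m => ekS m - Real.log (Real.log m) - (ekA m - Real.log m) / Real.log m with hB
  have key : ∀ m : ℕ, 2 ≤ m → |B m - B 2| ≤ (C + 1) * (1 / Real.log 2 - 1 / Real.log m) := by
    intro m hm
    induction m, hm using Nat.le_induction with
    | base => simp
    | succ m hm ih =>
      have hstep := ek_step m hm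
      have hr := hA m (by omega)
      have hm' : (2:ℝ) ≤ m := by exact_mod_cast hm
      set u := Real.log ((m+1 : ℕ) : ℝ) with hu
      set v := Real.log (m : ℝ) with hv
      have hv0 : 0 < v := Real.log_pos (by linarith)
      have huv : v ≤ u := Real.log_le_log (by linarith) (by push_cast; linarith)
      have hu0 : 0 < u := lt_of_lt_of_le hv0 huv
      have huv1 : u ≤ v + 1 := by
        have : u ≤ Real.log (m * Real.exp 1) := by
          apply Real.log_le_log (by positivity)
          push_cast
          nlinarith [Real.add_one_le_exp 1]
        rwa [Real.log_mul (by linarith) (Real.exp_pos 1).ne', Real.log_exp] at this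
      have hlog1 : Real.log u - Real.log v ≤ (u - v) / v := by
        have := Real.log_le_sub_one_of_pos (div_pos hu0 hv0)
        rw [Real.log_div hu0.ne' hv0.ne'] at this
        have e : u / v - 1 = (u - v) / v := by field_simp
        linarith
      have hlog2 : (u - v) / u ≤ Real.log u - Real.log v := by
        have := Real.log_le_sub_one_of_pos (div_pos hv0 hu0)
        rw [Real.log_div hv0.ne' hu0.ne'] at this
        have e : 1 - v / u = (u - v) / u := by field_simp
        linarith
      have hd : B (m+1) - B m = (u - v) / u - (Real.log u - Real.log v) +
          (ekA m - v) * (1 / v - 1 / u) := by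
        simp only [hB, ← hu, ← hv]
        have : ekS (m+1) = ekS m + (ekA (m+1) - ekA m) / u := by linarith
        rw [this]; field_simp; ring
      have hw : 0 ≤ 1 / v - 1 / u := by
        rw [sub_nonneg]; exact one_div_le_one_div_of_le hv0 huv
      have hd2 : |B (m+1) - B m| ≤ (C + 1) * (1 / v - 1 / u) := by
        rw [hd]
        have h1 : |(u - v) / u - (Real.log u - Real.log v)| ≤ 1 / v - 1 / u := by
          have e : (u - v) / v - (u - v) / u = (u - v) * (1 / v - 1 / u) := by ring
          have e2 : (u - v) * (1 / v - 1 / u) ≤ 1 * (1 / v - 1 / u) := by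
            apply mul_le_mul_of_nonneg_right _ hw; linarith
          rw [abs_le]; constructor <;> linarith
        have h2 : |(ekA m - v) * (1 / v - 1 / u)| ≤ C * (1 / v - 1 / u) := by
          rw [abs_mul, abs_of_nonneg hw]
          exact mul_le_mul_of_nonneg_right hr hw
        refine (abs_add_le _ _).trans ?_
        linarith
      calc |B (m+1) - B 2| ≤ |B (m+1) - B m| + |B m - B 2| := abs_sub_le _ _ _
        _ ≤ _ := by linarith
  have hl2 : 0 < Real.log 2 := Real.log_pos (by norm_num)
  refine ⟨|B 2| + (C + 1) * (1 / Real.log 2) + C / Real.log 2, by positivity, fun n hn => ?_⟩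
  have hk := key n hn
  have hn' : (2:ℝ) ≤ n := by exact_mod_cast hn
  have hln : Real.log 2 ≤ Real.log n := Real.log_le_log (by norm_num) hn'
  have hln0 : 0 < Real.log n := by linarith
  have e : ekS n - Real.log (Real.log n) = B 2 + (B n - B 2) + (ekA n - Real.log n) / Real.log n := by
    simp only [hB]; ring
  rw [e]
  have h3 : |(ekA n - Real.log n) / Real.log n| ≤ C / Real.log 2 := by
    rw [abs_div, abs_of_pos hln0]
    exact div_le_div₀ hC (hA n (by omega)) hl2 hln
  have h4 : (C + 1) * (1 / Real.log 2 - 1 / Real.log n) ≤ (C + 1) * (1 / Real.log 2) := by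
    have : 0 ≤ 1 / Real.log n := by positivity
    apply mul_le_mul_of_nonneg_left _ (by linarith); linarith
  calc _ ≤ |B 2| + |B n - B 2| + _ := (abs_add_le _ _).trans (add_le_add_left (abs_add_le _ _) _)
    _ ≤ _ := by linarith

lemma ek_bonf (z : ℂ) (hz : ‖1 + z‖ ≤ 1) (k N : ℕ) :
    ‖(1 + z) ^ N - ∑ j ∈ Finset.range (k + 1), (N.choose j : ℂ) * z ^ j‖ ≤
      N.choose (k + 1) * ‖z‖ ^ (k + 1) := by
  induction N with
  | zero =>
    rw [Finset.sum_eq_single 0]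
    · simp
    · intro b _ hb
      simp [Nat.choose_eq_zero_of_lt (Nat.pos_of_ne_zero hb)]
    · simp
  | succ N ih =>
    have e : ∀ k : ℕ, (∑ j ∈ Finset.range (k + 1), ((N+1).choose j : ℂ) * z ^ j) =
        (1 + z) * (∑ j ∈ Finset.range (k + 1), (N.choose j : ℂ) * z ^ j) -
          N.choose k * z ^ (k+1) := by
      intro k
      induction k with
      | zero => simp
      | succ k ihk =>
        rw [Finset.sum_range_succ, ihk, Finset.sum_range_succ _ (k+1), Nat.choose_succ_succ]
        push_cast
        ring
    rw [e]
    have e2 : (1 + z) ^ (N+1) - ((1 + z) * (∑ j ∈ Finset.range (k + 1), (N.choose j : ℂ) * z ^ j) -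
          N.choose k * z ^ (k+1)) = (1 + z) * ((1 + z) ^ N -
          ∑ j ∈ Finset.range (k + 1), (N.choose j : ℂ) * z ^ j) + N.choose k * z ^ (k+1) := by ring
    rw [e2]
    refine (norm_add_le _ _).trans ?_
    rw [norm_mul, norm_mul, norm_pow, Complex.norm_natCast, Nat.choose_succ_succ]
    push_cast
    have : ‖1 + z‖ * ‖(1 + z) ^ N - ∑ j ∈ Finset.range (k + 1), (N.choose j : ℂ) * z ^ j‖ ≤
      N.choose (k + 1) * ‖z‖ ^ (k + 1) :=
      (mul_le_of_le_one_left (norm_nonneg _) hz).trans ih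
    linarith

/-- elementary symmetric sums of reciprocals -/
noncomputable def ekE (P : Finset ℕ) (j : ℕ) : ℝ := ∑ S ∈ P.powersetCard j, ∏ p ∈ S, (1 / (p : ℝ))

lemma ekE_nonneg (P : Finset ℕ) (j : ℕ) : 0 ≤ ekE P j :=
  Finset.sum_nonneg fun _ _ => Finset.prod_nonneg fun _ _ => by positivity

lemma ek_gen {R : Type*} [CommRing R] (P : Finset ℕ) (f : ℕ → R) (w : R) (K : ℕ) (hK : P.card < K) :
    ∏ p ∈ P, (1 + w * f p) = ∑ j ∈ Finset.range K, w ^ j * ∑ S ∈ P.powersetCard j, ∏ p ∈ S, f p := by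
  rw [Finset.prod_one_add, Finset.sum_powerset]
  have hsub : Finset.range (P.card + 1) ⊆ Finset.range K := by
    intro j; simp; omega
  rw [← Finset.sum_subset hsub]
  · refine Finset.sum_congr rfl fun j _ => ?_
    rw [Finset.mul_sum]
    refine Finset.sum_congr rfl fun S hS => ?_
    rw [Finset.prod_mul_distrib, Finset.prod_const, (Finset.mem_powersetCard.1 hS).2]
  · intro j _ hj
    rw [Finset.powersetCard_eq_empty.2 (by simp at hj; omega)]
    simp

lemma ek_count (n : ℕ) (S : Finset ℕ) (hS : ∀ p ∈ S, p.Prime) :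
    ((Finset.Icc 1 n).filter (fun m => ∀ p ∈ S, p ∣ m)).card = n / ∏ p ∈ S, p := by
  rw [← Nat.Ioc_filter_dvd_card_eq_div]
  congr 1
  ext m
  simp only [Finset.mem_filter, Finset.mem_Icc, Finset.mem_Ioc, Nat.succ_le_iff]
  refine and_congr_right fun _ => ⟨fun h => ?_, fun h p hp => (Finset.dvd_prod_of_mem _ hp).trans h⟩
  exact Finset.prod_primes_dvd m (fun p hp => (hS p hp).prime) h

lemma ek_choose_sum (n j : ℕ) (P : Finset ℕ) (hP : ∀ p ∈ P, p.Prime) :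
    ∑ m ∈ Finset.Icc 1 n, (P.filter (· ∣ m)).card.choose j =
      ∑ S ∈ P.powersetCard j, n / ∏ p ∈ S, p := by
  have h1 : ∀ m, (P.filter (· ∣ m)).card.choose j =
      ∑ S ∈ P.powersetCard j, if (∀ p ∈ S, p ∣ m) then 1 else 0 := by
    intro m
    rw [← Finset.card_powersetCard, ← Finset.card_filter]
    congr 1
    ext S
    simp only [Finset.mem_powersetCard, Finset.mem_filter, Finset.subset_iff]
    constructor
    · rintro ⟨h, h2⟩; exact ⟨⟨fun p hp => (h hp).1, h2⟩, fun p hp => (h hp).2⟩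
    · rintro ⟨⟨h, h2⟩, h3⟩; exact ⟨fun p hp => ⟨h hp, h3 p hp⟩, h2⟩
  simp_rw [h1]
  rw [Finset.sum_comm]
  refine Finset.sum_congr rfl fun S hS => ?_
  rw [← ek_count n S fun p hp => hP p ((Finset.mem_powersetCard.1 hS).1 hp), Finset.card_filter]

lemma ek_comb (n N k : ℕ) (hn : 1 ≤ n) (hN : 1 ≤ N) (P : Finset ℕ) (hP : ∀ p ∈ P, p.Prime)
    (hPN : P.card ≤ N) (z : ℂ) (hz : ‖1 + z‖ ≤ 1) :
    ‖(∑ m ∈ Finset.Icc 1 n, (1 + z) ^ (P.filter (· ∣ m)).card) / n - ∏ p ∈ P, (1 + z * (1 / (p : ℂ)))‖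
      ≤ 2 * Real.exp (Real.exp 1 * ‖z‖ * (∑ p ∈ P, 1 / (p : ℝ)) - k) +
        Real.exp 2 * N ^ k / n := by
  have hn0 : (0:ℝ) < n := by exact_mod_cast hn
  have hN0 : (0:ℝ) < N := by exact_mod_cast hN
  have hz2 : ‖z‖ ≤ 2 := by
    have : z = (1 + z) - 1 := by ring
    rw [this]
    refine (norm_sub_le _ _).trans ?_
    simp; linarith
  set a : ℕ → ℝ := fun j => (∑ m ∈ Finset.Icc 1 n, ((P.filter (· ∣ m)).card.choose j : ℝ)) / n with ha
  have ha' : ∀ j, a j = ∑ S ∈ P.powersetCard j, ((n / ∏ p ∈ S, p : ℕ) : ℝ) / n := by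
    intro j
    simp only [ha]
    rw [← Finset.sum_div]
    congr 1
    exact_mod_cast ek_choose_sum n j P hP
  have hterm : ∀ j, ∀ S ∈ P.powersetCard j, ((n / ∏ p ∈ S, p : ℕ) : ℝ) / n ≤ ∏ p ∈ S, (1 / (p:ℝ)) ∧
      ∏ p ∈ S, (1 / (p:ℝ)) - 1 / n ≤ ((n / ∏ p ∈ S, p : ℕ) : ℝ) / n := by
    intro j S hS
    have e : ∏ p ∈ S, (1 / (p:ℝ)) = 1 / ((∏ p ∈ S, p : ℕ) : ℝ) := by
      rw [Finset.prod_div_distrib]; simp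
    rw [e]
    set d := ∏ p ∈ S, p
    have hd : 0 < d := Finset.prod_pos fun p hp => (hP p ((Finset.mem_powersetCard.1 hS).1 hp)).pos
    have hd' : (0:ℝ) < d := by exact_mod_cast hd
    have h1 : ((n / d : ℕ) : ℝ) ≤ n / d := Nat.cast_div_le
    have h2 : (n : ℝ) / d < (n / d : ℕ) + 1 := by
      rw [← Nat.floor_div_eq_div (K := ℝ)]; exact Nat.lt_floor_add_one _
    constructor
    · rw [div_le_iff₀ hn0, one_div_mul_eq_div]; exact h1
    · rw [le_div_iff₀ hn0]
      have : (1 / (d:ℝ) - 1 / n) * n = n / d - 1 := by field_simp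
      linarith
  have hale : ∀ j, a j ≤ ekE P j := by
    intro j
    rw [ha']
    exact Finset.sum_le_sum fun S hS => (hterm j S hS).1
  have hage : ∀ j, ‖(a j : ℂ) - ekE P j‖ ≤ (P.card.choose j : ℝ) / n := by
    intro j
    rw [← Complex.ofReal_sub, Complex.norm_real, Real.norm_eq_abs, abs_sub_comm,
      abs_of_nonneg (by linarith [hale j])]
    rw [ha', ekE, ← Finset.sum_sub_distrib, ← Finset.card_powersetCard, div_eq_mul_one_div,
      ← nsmul_eq_mul]
    exact Finset.sum_le_card_nsmul _ _ _ fun S hS => by linarith [(hterm j S hS).2]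
  set K := P.card + k + 2 with hK
  set E := Real.exp (Real.exp 1 * ‖z‖ * (∑ p ∈ P, 1 / (p : ℝ)) - k) with hE
  -- Rankin
  have hrank : ∑ j ∈ Finset.range K, (Real.exp 1 * ‖z‖) ^ j * ekE P j ≤
      Real.exp (Real.exp 1 * ‖z‖ * (∑ p ∈ P, 1 / (p : ℝ))) := by
    unfold ekE
    rw [← ek_gen P (fun p => 1 / (p:ℝ)) (Real.exp 1 * ‖z‖) K (by omega), Finset.mul_sum, Real.exp_sum]
    refine Finset.prod_le_prod (fun p _ => by positivity) fun p _ => ?_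
    rw [add_comm]; exact Real.add_one_le_exp _
  have htail : ∑ j ∈ Finset.Ico (k+1) K, ‖z‖ ^ j * ekE P j ≤ E := by
    rw [hE, Real.exp_sub, le_div_iff₀ (Real.exp_pos _)]
    refine le_trans ?_ hrank
    rw [Finset.sum_mul]
    refine le_trans (Finset.sum_le_sum (g := fun j => (Real.exp 1 * ‖z‖) ^ j * ekE P j) ?_)
      (Finset.sum_le_sum_of_subset_of_nonneg (by intro j; simp) fun j _ _ =>
        mul_nonneg (by positivity) (ekE_nonneg P j))
    intro j hj
    have hkj : (k:ℝ) ≤ j := by simp at hj; exact_mod_cast (by omega)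
    have h1 : Real.exp k ≤ Real.exp 1 ^ j := by
      rw [← Real.exp_nat_mul, mul_one]; exact Real.exp_le_exp.2 hkj
    have := ekE_nonneg P j
    calc ‖z‖ ^ j * ekE P j * Real.exp k ≤ ‖z‖ ^ j * ekE P j * Real.exp 1 ^ j := by gcongr
      _ = _ := by rw [mul_pow]; ring
  have hone : ‖z‖ ^ (k+1) * ekE P (k+1) ≤ E := by
    refine le_trans ?_ htail
    exact Finset.single_le_sum (f := fun j => ‖z‖ ^ j * ekE P j)
      (fun j _ => mul_nonneg (by positivity) (ekE_nonneg P j)) (by simp; omega)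
  have hfloor : ∑ j ∈ Finset.range (k+1), ‖z‖ ^ j * (P.card.choose j : ℝ) ≤ Real.exp 2 * N ^ k := by
    have h1 : (1 + 2 / (N:ℝ)) ^ P.card ≤ Real.exp 2 := by
      have h0 : 1 + 2 / (N:ℝ) ≤ Real.exp (2 / N) := by rw [add_comm]; exact Real.add_one_le_exp _
      have h00 : (0:ℝ) ≤ 2 / N := by positivity
      calc (1 + 2 / (N:ℝ)) ^ P.card ≤ (Real.exp (2 / N)) ^ N := by
            refine (pow_le_pow_left₀ (by positivity) h0 _).trans ?_
            exact pow_le_pow_right₀ (Real.one_le_exp h00) hPN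
        _ = Real.exp 2 := by rw [← Real.exp_nat_mul]; congr 1; field_simp
    have h2 : ∑ j ∈ Finset.range K, (2 / (N:ℝ)) ^ j * (P.card.choose j : ℝ) = (1 + 2 / (N:ℝ)) ^ P.card := by
      have := ek_gen P (fun _ => (1:ℝ)) (2 / (N:ℝ)) K (by omega)
      simp at this
      rw [this]
    calc ∑ j ∈ Finset.range (k+1), ‖z‖ ^ j * (P.card.choose j : ℝ)
        ≤ ∑ j ∈ Finset.range (k+1), (2 / (N:ℝ)) ^ j * (P.card.choose j : ℝ) * N ^ k := by
          refine Finset.sum_le_sum fun j hj => ?_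
          have hj' : j ≤ k := by simp at hj; omega
          have : ‖z‖ ^ j ≤ (2 / (N:ℝ)) ^ j * N ^ k := by
            calc ‖z‖ ^ j ≤ 2 ^ j := by gcongr
              _ = (2 / (N:ℝ)) ^ j * N ^ j := by rw [← mul_pow]; congr 1; field_simp
              _ ≤ _ := by gcongr; exact_mod_cast hN
          calc _ ≤ (2 / (N:ℝ)) ^ j * N ^ k * (P.card.choose j : ℝ) :=
                mul_le_mul_of_nonneg_right this (Nat.cast_nonneg _)
            _ = _ := by ring
      _ ≤ ∑ j ∈ Finset.range K, (2 / (N:ℝ)) ^ j * (P.card.choose j : ℝ) * N ^ k :=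
          Finset.sum_le_sum_of_subset_of_nonneg (by intro j; simp; omega) fun j _ _ => by positivity
      _ ≤ _ := by rw [← Finset.sum_mul, h2]; gcongr
  -- three pieces
  have hp1 : ‖(∑ m ∈ Finset.Icc 1 n, (1 + z) ^ (P.filter (· ∣ m)).card) / n -
      ∑ j ∈ Finset.range (k+1), (a j : ℂ) * z ^ j‖ ≤ E := by
    have e : (∑ m ∈ Finset.Icc 1 n, (1 + z) ^ (P.filter (· ∣ m)).card) / n -
        ∑ j ∈ Finset.range (k+1), (a j : ℂ) * z ^ j =
        (∑ m ∈ Finset.Icc 1 n, ((1 + z) ^ (P.filter (· ∣ m)).card -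
          ∑ j ∈ Finset.range (k+1), ((P.filter (· ∣ m)).card.choose j : ℂ) * z ^ j)) / n := by
      rw [Finset.sum_sub_distrib, sub_div]
      congr 1
      rw [Finset.sum_comm, Finset.sum_div]
      refine Finset.sum_congr rfl fun j _ => ?_
      simp only [ha]
      push_cast
      rw [← Finset.sum_mul]; ring
    rw [e, norm_div, Complex.norm_natCast, div_le_iff₀ hn0]
    refine (norm_sum_le _ _).trans ((Finset.sum_le_sum fun m _ => ek_bonf z hz k _).trans ?_)
    rw [← Finset.sum_mul]
    have h1 := hale (k+1)
    have h2 : ∑ m ∈ Finset.Icc 1 n, ((P.filter (· ∣ m)).card.choose (k+1) : ℝ) = a (k+1) * n := by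
      simp only [ha]; field_simp
    rw [h2]
    calc a (k+1) * n * ‖z‖ ^ (k+1) = ‖z‖ ^ (k+1) * a (k+1) * n := by ring
      _ ≤ ‖z‖ ^ (k+1) * ekE P (k+1) * n := by gcongr
      _ ≤ E * n := by gcongr
  have hp2 : ‖∑ j ∈ Finset.range (k+1), (a j : ℂ) * z ^ j -
      ∑ j ∈ Finset.range (k+1), (ekE P j : ℂ) * z ^ j‖ ≤ Real.exp 2 * N ^ k / n := by
    rw [← Finset.sum_sub_distrib]
    refine (norm_sum_le _ _).trans ?_
    refine le_trans ?_ (div_le_div_of_nonneg_right hfloor hn0.le)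
    rw [Finset.sum_div]
    refine Finset.sum_le_sum fun j _ => ?_
    rw [← sub_mul, norm_mul, norm_pow]
    calc _ ≤ (P.card.choose j : ℝ) / n * ‖z‖ ^ j := by gcongr; exact hage j
      _ = _ := by ring
  have hp3 : ‖∑ j ∈ Finset.range (k+1), (ekE P j : ℂ) * z ^ j - ∏ p ∈ P, (1 + z * (1 / (p : ℂ)))‖ ≤ E := by
    rw [ek_gen P (fun p => 1 / (p:ℂ)) z K (by omega), norm_sub_rev]
    have e : ∑ j ∈ Finset.range K, z ^ j * ∑ S ∈ P.powersetCard j, ∏ p ∈ S, 1 / (p:ℂ) =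
        ∑ j ∈ Finset.range K, (ekE P j : ℂ) * z ^ j := by
      refine Finset.sum_congr rfl fun j _ => ?_
      rw [ekE]; push_cast; ring
    rw [e, ← Finset.sum_Ico_eq_sub _ (by omega : k + 1 ≤ K)]
    refine (norm_sum_le _ _).trans (le_trans (le_of_eq ?_) htail)
    refine Finset.sum_congr rfl fun j _ => ?_
    rw [norm_mul, norm_pow, Complex.norm_real, Real.norm_eq_abs, abs_of_nonneg (ekE_nonneg P j), mul_comm]
  have := norm_sub_le_norm_sub_add_norm_sub
    ((∑ m ∈ Finset.Icc 1 n, (1 + z) ^ (P.filter (· ∣ m)).card) / n)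
    (∑ j ∈ Finset.range (k+1), (a j : ℂ) * z ^ j) (∏ p ∈ P, (1 + z * (1 / (p : ℂ))))
  have h2 := norm_sub_le_norm_sub_add_norm_sub
    (∑ j ∈ Finset.range (k+1), (a j : ℂ) * z ^ j) (∑ j ∈ Finset.range (k+1), (ekE P j : ℂ) * z ^ j)
    (∏ p ∈ P, (1 + z * (1 / (p : ℂ))))
  linarith

lemma ek_trunc (n N : ℕ) (hn : 1 ≤ n) (hN : N ≤ n) (τ : ℝ) :
    ‖(∑ m ∈ Finset.Icc 1 n, Complex.exp (τ * Complex.I) ^ m.primeFactors.card) / n -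
      (∑ m ∈ Finset.Icc 1 n, Complex.exp (τ * Complex.I) ^ ((Nat.primesLE N).filter (· ∣ m)).card) / n‖
      ≤ |τ| * (ekS n - ekS N) := by
  have hn0 : (0:ℝ) < n := by exact_mod_cast hn
  have hsub : Nat.primesLE N ⊆ Nat.primesLE n := Nat.primesLE_mono hN
  set Q := Nat.primesLE n \ Nat.primesLE N with hQ
  have hS : ekS n - ekS N = ∑ p ∈ Q, 1 / (p:ℝ) := by
    have := Finset.sum_sdiff (f := fun p : ℕ => 1 / (p:ℝ)) hsub
    unfold ekS; rw [← this]; ring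
  have hcard : ∀ m ∈ Finset.Icc 1 n, m.primeFactors.card =
      (Q.filter (· ∣ m)).card + ((Nat.primesLE N).filter (· ∣ m)).card := by
    intro m hm
    rw [Finset.mem_Icc] at hm
    rw [← Finset.card_union_of_disjoint, ← Finset.filter_union, hQ, Finset.sdiff_union_of_subset hsub]
    · congr 1
      ext p
      simp only [Nat.mem_primeFactors, Finset.mem_filter, Nat.mem_primesLE]
      constructor
      · rintro ⟨h1, h2, h3⟩
        exact ⟨⟨(Nat.le_of_dvd (by omega) h2).trans hm.2, h1⟩, h2⟩
      · rintro ⟨⟨h1, h2⟩, h3⟩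
        exact ⟨h2, h3, by omega⟩
    · exact Finset.disjoint_filter_filter Finset.sdiff_disjoint
  have hnorm : ‖Complex.exp (τ * Complex.I)‖ = 1 := Complex.norm_exp_ofReal_mul_I τ
  have hpt : ∀ m ∈ Finset.Icc 1 n, ‖Complex.exp (τ * Complex.I) ^ m.primeFactors.card -
      Complex.exp (τ * Complex.I) ^ ((Nat.primesLE N).filter (· ∣ m)).card‖ ≤
      |τ| * ((Q.filter (· ∣ m)).card : ℝ) := by
    intro m hm
    rw [hcard m hm, pow_add, ← sub_one_mul, norm_mul, norm_pow, hnorm, one_pow, mul_one,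
      ← Complex.exp_nat_mul]
    have := Real.norm_exp_I_mul_ofReal_sub_one_le (x := ((Q.filter (· ∣ m)).card : ℝ) * τ)
    rw [Real.norm_eq_abs, abs_mul, Nat.abs_cast] at this
    rw [mul_comm |τ|]
    refine le_trans (le_of_eq ?_) this
    congr 3
    push_cast; ring
  rw [← sub_div, ← Finset.sum_sub_distrib, norm_div, Complex.norm_natCast, div_le_iff₀ hn0]
  refine (norm_sum_le _ _).trans ((Finset.sum_le_sum hpt).trans ?_)
  rw [← Finset.mul_sum, mul_assoc]
  refine mul_le_mul_of_nonneg_left ?_ (abs_nonneg τ)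
  have h1 : ∑ m ∈ Finset.Icc 1 n, ((Q.filter (· ∣ m)).card : ℝ) = ∑ p ∈ Q, ((n / p : ℕ) : ℝ) := by
    norm_cast
    simp_rw [Finset.card_filter]
    rw [Finset.sum_comm]
    refine Finset.sum_congr rfl fun p _ => ?_
    rw [← Finset.card_filter, ← Nat.Ioc_filter_dvd_card_eq_div]
    rfl
  rw [h1, hS, Finset.sum_mul]
  refine Finset.sum_le_sum fun p _ => ?_
  rw [one_div_mul_eq_div]
  exact Nat.cast_div_le

lemma ek_prod_sub (s : Finset ℕ) (f g : ℕ → ℂ) (hf : ∀ i ∈ s, ‖f i‖ ≤ 1) (hg : ∀ i ∈ s, ‖g i‖ ≤ 1) :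
    ‖∏ i ∈ s, f i - ∏ i ∈ s, g i‖ ≤ ∑ i ∈ s, ‖f i - g i‖ := by
  induction s using Finset.induction_on with
  | empty => simp
  | insert a s ha ih =>
    rw [Finset.prod_insert ha, Finset.prod_insert ha, Finset.sum_insert ha]
    have ih' := ih (fun i hi => hf i (Finset.mem_insert_of_mem hi))
      (fun i hi => hg i (Finset.mem_insert_of_mem hi))
    have hG : ‖∏ i ∈ s, g i‖ ≤ 1 := by
      rw [norm_prod]
      exact Finset.prod_le_one (fun _ _ => norm_nonneg _) fun i hi => hg i (Finset.mem_insert_of_mem hi)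
    have e : f a * ∏ i ∈ s, f i - g a * ∏ i ∈ s, g i =
      f a * (∏ i ∈ s, f i - ∏ i ∈ s, g i) + (f a - g a) * ∏ i ∈ s, g i := by ring
    rw [e]
    refine (norm_add_le _ _).trans ?_
    rw [norm_mul, norm_mul]
    have h1 := mul_le_of_le_one_left (norm_nonneg (∏ i ∈ s, f i - ∏ i ∈ s, g i))
      (hf a (Finset.mem_insert_self _ _))
    have h2 := mul_le_of_le_one_right (norm_nonneg (f a - g a)) hG
    linarith

lemma ek_prod_exp : ∃ C : ℝ, 0 ≤ C ∧ ∀ (N : ℕ) (z : ℂ), ‖1 + z‖ ≤ 1 → ‖z‖ ≤ 1 →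
    ‖∏ p ∈ Nat.primesLE N, (1 + z * (1 / (p : ℂ))) - Complex.exp (z * ekS N)‖ ≤ C * ‖z‖ ^ 2 := by
  have hsum : Summable fun n : ℕ => 1 / (n : ℝ) ^ 2 := Real.summable_one_div_nat_pow.2 (by norm_num)
  refine ⟨∑' n : ℕ, 1 / (n : ℝ) ^ 2, tsum_nonneg fun n => by positivity, fun N z hz hz1 => ?_⟩
  have hre : z.re ≤ 0 := by
    have := (Complex.re_le_norm (1 + z)).trans hz
    simp at this
    linarith
  have e : Complex.exp (z * ekS N) = ∏ p ∈ Nat.primesLE N, Complex.exp (z * (1 / (p : ℂ))) := by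
    rw [← Complex.exp_sum, ekS, ← Finset.mul_sum]; push_cast; rfl
  rw [e]
  have hp1 : ∀ p ∈ Nat.primesLE N, (1:ℝ) ≤ p := fun p hp => by
    exact_mod_cast (Nat.one_lt_of_mem_primesLE hp).le
  refine (ek_prod_sub _ _ _ ?_ ?_).trans ?_
  · intro p hp
    have hp0 : (0:ℝ) < p := by linarith [hp1 p hp]
    have hinv : 1 / (p:ℝ) ≤ 1 := by rw [div_le_one hp0]; exact hp1 p hp
    have e : 1 + z * (1 / (p:ℂ)) = ((1 - 1 / (p:ℝ) : ℝ) : ℂ) + ((1 / (p:ℝ) : ℝ) : ℂ) * (1 + z) := by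
      push_cast; ring
    rw [e]
    refine (norm_add_le _ _).trans ?_
    rw [norm_mul, Complex.norm_real, Complex.norm_real, Real.norm_eq_abs, Real.norm_eq_abs,
      abs_of_nonneg (by linarith), abs_of_nonneg (by positivity)]
    have : 1 / (p:ℝ) * ‖1 + z‖ ≤ 1 / p := mul_le_of_le_one_right (by positivity) hz
    linarith
  · intro p hp
    rw [Complex.norm_exp, Real.exp_le_one_iff]
    have : (1 / (p:ℂ)) = ((1 / (p:ℝ) : ℝ) : ℂ) := by push_cast; rfl
    rw [this, Complex.re_mul_ofReal]
    exact mul_nonpos_of_nonpos_of_nonneg hre (by positivity)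
  · calc _ ≤ ∑ p ∈ Nat.primesLE N, ‖z‖ ^ 2 * (1 / (p:ℝ) ^ 2) := by
          refine Finset.sum_le_sum fun p hp => ?_
          have hp0 : (0:ℝ) < p := by linarith [hp1 p hp]
          have hw : ‖z * (1 / (p:ℂ))‖ = ‖z‖ * (1 / p) := by simp
          have hw1 : ‖z * (1 / (p:ℂ))‖ ≤ 1 := by
            rw [hw, mul_one_div, div_le_one hp0]; linarith [hp1 p hp]
          have := Complex.norm_exp_sub_one_sub_id_le hw1
          rw [norm_sub_rev, ← sub_sub]
          refine this.trans (le_of_eq ?_)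
          rw [hw, mul_pow, one_div_pow]
      _ = (∑ p ∈ Nat.primesLE N, 1 / (p:ℝ) ^ 2) * ‖z‖ ^ 2 := by rw [← Finset.mul_sum, mul_comm]
      _ ≤ _ := by
        gcongr
        exact hsum.sum_le_tsum _ fun i _ => by positivity

lemma ek_loglog : Tendsto (fun n : ℕ => Real.log (Real.log n)) atTop atTop :=
  Real.tendsto_log_atTop.comp (Real.tendsto_log_atTop.comp tendsto_natCast_atTop_atTop)

lemma ek_small (C : ℝ) : Tendsto (fun x : ℝ => (2 * Real.log x + C) / √x) atTop (nhds 0) := by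
  have h1 : Tendsto (fun x : ℝ => Real.log x / √x) atTop (nhds 0) := by
    have := (isLittleO_log_rpow_atTop (r := 1/2) (by norm_num)).tendsto_div_nhds_zero
    simpa [Real.sqrt_eq_rpow] using this
  have h2 : Tendsto (fun x : ℝ => C / √x) atTop (nhds 0) :=
    Tendsto.div_atTop tendsto_const_nhds Real.tendsto_sqrt_atTop
  have := (h1.const_mul 2).add h2
  simp only [mul_zero, add_zero] at this
  refine this.congr fun x => ?_
  ring

lemma ek_params : ∃ N k : ℕ → ℕ, (∀ᶠ n in atTop, 1 ≤ N n ∧ N n ≤ n) ∧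
    (∀ n : ℕ, Real.log (Real.log n) ≤ k n) ∧
    Tendsto (fun n : ℕ => (ekS (N n) - Real.log (Real.log n)) / √(Real.log (Real.log n))) atTop (nhds 0) ∧
    Tendsto (fun n : ℕ => (ekS n - ekS (N n)) / √(Real.log (Real.log n))) atTop (nhds 0) ∧
    Tendsto (fun n : ℕ => ((N n : ℝ) ^ k n) / n) atTop (nhds 0) := by
  obtain ⟨C, hC, hM⟩ := ek_mertens2
  set L : ℕ → ℝ := fun n => Real.log (Real.log n) with hL
  have hLt : Tendsto L atTop atTop := ek_loglog
  set Y : ℕ → ℝ := fun n => Real.log n / L n ^ 2 with hY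
  set N : ℕ → ℕ := fun n => ⌊Real.exp (Y n)⌋₊ with hN
  have hlogt : Tendsto (fun n : ℕ => Real.log n) atTop atTop :=
    Real.tendsto_log_atTop.comp tendsto_natCast_atTop_atTop
  have hYt : Tendsto Y atTop atTop := by
    have := (Real.tendsto_exp_div_pow_atTop 2).comp hLt
    refine this.congr' ?_
    filter_upwards [hlogt.eventually_gt_atTop 0] with n hn
    simp only [Function.comp, hY, hL]
    rw [Real.exp_log hn]
  -- basic estimate
  have hev : ∀ᶠ n in atTop, (1 ≤ N n ∧ N n ≤ n) ∧ |ekS (N n) - (L n - 2 * Real.log (L n))| ≤ C + Real.log 2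
      ∧ |ekS n - L n| ≤ C ∧ 3 ≤ L n ∧ 0 < Real.log n := by
    filter_upwards [hlogt.eventually_gt_atTop 0, hLt.eventually_ge_atTop 3, hYt.eventually_ge_atTop 2,
      eventually_ge_atTop 2] with n hn hL3 hY2 hn2
    have hn0 : (0:ℝ) < n := by positivity
    have hYle : Y n ≤ Real.log n := by
      rw [hY]; apply div_le_self hn.le; nlinarith
    have hNle : (N n : ℝ) ≤ Real.exp (Y n) := Nat.floor_le (Real.exp_pos _).le
    have hNgt : Real.exp (Y n) < N n + 1 := Nat.lt_floor_add_one _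
    have hexp : 3 ≤ Real.exp (Y n) := by linarith [Real.add_one_le_exp (Y n)]
    have hN2 : 2 ≤ N n := Nat.le_floor (by push_cast; linarith)
    have hN2' : (2:ℝ) ≤ N n := by exact_mod_cast hN2
    have hl2 : Real.log 2 < 1 := by linarith [Real.log_two_lt_d9]
    have hl20 : 0 < Real.log 2 := Real.log_pos (by norm_num)
    have hup : Real.log (N n) ≤ Y n := by
      rw [← Real.log_exp (Y n)]; exact Real.log_le_log (by linarith) hNle
    have hlo : Y n / 2 ≤ Real.log (N n) := by
      have : Real.log (Real.exp (Y n) / 2) ≤ Real.log (N n) :=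
        Real.log_le_log (by positivity) (by linarith)
      rw [Real.log_div (Real.exp_pos _).ne' (by norm_num), Real.log_exp] at this
      linarith
    have hLY : Real.log (Y n) = L n - 2 * Real.log (L n) := by
      simp only [hY]
      rw [Real.log_div hn.ne' (by positivity), Real.log_pow]
      simp [hL]
    have hup2 : Real.log (Real.log (N n)) ≤ Real.log (Y n) := Real.log_le_log (by linarith) hup
    have hlo2 : Real.log (Y n) - Real.log 2 ≤ Real.log (Real.log (N n)) := by
      rw [← Real.log_div (by linarith) (by norm_num)]
      exact Real.log_le_log (by linarith) hlo
    have hMN := hM (N n) hN2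
    refine ⟨⟨by omega, ?_⟩, ?_, hM n hn2, hL3, hn⟩
    · have : (N n : ℝ) ≤ n := by
        refine hNle.trans ?_
        rw [← Real.exp_log hn0]; exact Real.exp_le_exp.2 hYle
      exact_mod_cast this
    · rw [← hLY]
      rw [abs_le] at hMN ⊢
      constructor <;> linarith
  refine ⟨N, fun n => ⌈L n⌉₊, hev.mono fun n h => h.1, fun n => Nat.le_ceil _, ?_, ?_, ?_⟩
  · refine squeeze_zero_norm' ?_ ((ek_small (C + Real.log 2)).comp hLt)
    filter_upwards [hev] with n ⟨_, h1, _, h3, _⟩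
    simp only [Function.comp]
    rw [norm_div, Real.norm_eq_abs, Real.norm_eq_abs, abs_of_nonneg (Real.sqrt_nonneg _)]
    apply div_le_div_of_nonneg_right _ (Real.sqrt_nonneg _)
    have hlog : 0 ≤ Real.log (L n) := Real.log_nonneg (by linarith)
    have : |ekS (N n) - L n| ≤ |ekS (N n) - (L n - 2 * Real.log (L n))| + |2 * Real.log (L n)| := by
      have e : ekS (N n) - L n = ekS (N n) - (L n - 2 * Real.log (L n)) - 2 * Real.log (L n) := by ring
      rw [e]; exact abs_sub _ _
    rw [abs_of_nonneg (by linarith : 0 ≤ 2 * Real.log (L n))] at this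
    change |ekS (N n) - L n| ≤ _
    linarith
  · refine squeeze_zero_norm' ?_ ((ek_small (2 * C + Real.log 2)).comp hLt)
    filter_upwards [hev] with n ⟨_, h1, h2, h3, _⟩
    simp only [Function.comp]
    rw [norm_div, Real.norm_eq_abs, Real.norm_eq_abs, abs_of_nonneg (Real.sqrt_nonneg _)]
    apply div_le_div_of_nonneg_right _ (Real.sqrt_nonneg _)
    have hlog : 0 ≤ Real.log (L n) := Real.log_nonneg (by linarith)
    rw [abs_le] at h1 h2 ⊢
    have := Real.log_nonneg (by norm_num : (1:ℝ) ≤ 2)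
    constructor <;> linarith
  · have hlim : Tendsto (fun n : ℕ => Real.exp (-(Real.log n / 2))) atTop (nhds 0) :=
      Real.tendsto_exp_neg_atTop_nhds_zero.comp (hlogt.atTop_div_const (by norm_num))
    refine squeeze_zero' (Eventually.of_forall fun n => by positivity) ?_ hlim
    filter_upwards [hev, eventually_ge_atTop 1] with n ⟨_, _, _, h3, h4⟩ hn1
    have hn0 : (0:ℝ) < n := by positivity
    rw [div_le_iff₀ hn0]
    have hNle : (N n : ℝ) ≤ Real.exp (Y n) := Nat.floor_le (Real.exp_pos _).le
    calc (N n : ℝ) ^ ⌈L n⌉₊ ≤ Real.exp (Y n) ^ ⌈L n⌉₊ := by gcongr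
      _ = Real.exp (⌈L n⌉₊ * Y n) := by rw [Real.exp_nat_mul]
      _ ≤ Real.exp (Real.log n / 2) := by
        apply Real.exp_le_exp.2
        have hk : (⌈L n⌉₊ : ℝ) ≤ L n + 1 := (Nat.ceil_lt_add_one (by linarith)).le
        have hY0 : 0 ≤ Y n := by simp only [hY]; positivity
        calc (⌈L n⌉₊ : ℝ) * Y n ≤ (L n + 1) * Y n := by gcongr
          _ = Real.log n * ((L n + 1) / L n ^ 2) := by simp only [hY]; ring
          _ ≤ Real.log n * (1 / 2) := by
            apply mul_le_mul_of_nonneg_left _ h4.le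
            rw [div_le_div_iff₀ (by positivity) (by norm_num)]
            nlinarith
          _ = _ := by ring
      _ = Real.exp (-(Real.log n / 2)) * n := by
        conv_rhs => rw [← Real.exp_log hn0, ← Real.exp_add]
        simp only [Real.log_exp]
        congr 1; ring

lemma ek_exp_lim (t : ℝ) (L S : ℕ → ℝ) (hL : Tendsto L atTop atTop)
    (hS : Tendsto (fun n => (S n - L n) / √(L n)) atTop (nhds 0)) :
    Tendsto (fun n => Complex.exp (-((t / √(L n) : ℝ) * L n * Complex.I) +
      (Complex.exp ((t / √(L n) : ℝ) * Complex.I) - 1) * S n)) atTop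
      (nhds (Complex.exp (-t ^ 2 / 2))) := by
  refine (Complex.continuous_exp.tendsto _).comp ?_
  have hsq : Tendsto (fun n => √(L n)) atTop atTop := Real.tendsto_sqrt_atTop.comp hL
  have hinv : Tendsto (fun n => (√(L n))⁻¹) atTop (nhds 0) := tendsto_inv_atTop_zero.comp hsq
  have hτ : Tendsto (fun n => t / √(L n)) atTop (nhds 0) := by
    simpa [div_eq_mul_inv] using hinv.const_mul t
  have hSL : Tendsto (fun n => S n / L n) atTop (nhds 1) := by
    have := (hS.mul hinv).add_const 1
    simp only [zero_mul, zero_add] at this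
    refine this.congr' ?_
    filter_upwards [hL.eventually_gt_atTop 0] with n hn
    have h0 : √(L n) ≠ 0 := (Real.sqrt_pos.2 hn).ne'
    have h1 : √(L n) * √(L n) = L n := Real.mul_self_sqrt hn.le
    have : (S n - L n) / √(L n) * (√(L n))⁻¹ = (S n - L n) / L n := by
      rw [← div_eq_mul_inv, div_div, h1]
    rw [this]; field_simp; ring
  -- remainder
  have hrem : Tendsto (fun n => (Complex.exp ((t / √(L n) : ℝ) * Complex.I) - 1 -
      (t / √(L n) : ℝ) * Complex.I + ((t / √(L n) : ℝ) : ℂ) ^ 2 / 2) * S n) atTop (nhds 0) := by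
    have hb : Tendsto (fun n => |t| ^ 3 * (√(L n))⁻¹ * |S n / L n|) atTop (nhds 0) := by
      have := (hinv.const_mul (|t| ^ 3)).mul hSL.abs
      simpa using this
    refine squeeze_zero_norm' ?_ hb
    filter_upwards [hL.eventually_gt_atTop 0, hτ.abs.eventually_le_const (by simp : |(0:ℝ)| < 1)] with n hn h1
    have hx : ‖((t / √(L n) : ℝ) : ℂ) * Complex.I‖ = |t / √(L n)| := by
      rw [norm_mul, Complex.norm_I, mul_one, Complex.norm_real, Real.norm_eq_abs]
    have hb := Complex.exp_bound (x := ((t / √(L n) : ℝ) : ℂ) * Complex.I) (by rw [hx]; exact h1)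
      (n := 3) (by norm_num)
    rw [hx] at hb
    have e : Complex.exp ((t / √(L n) : ℝ) * Complex.I) - 1 -
      (t / √(L n) : ℝ) * Complex.I + ((t / √(L n) : ℝ) : ℂ) ^ 2 / 2 =
      Complex.exp (((t / √(L n) : ℝ) : ℂ) * Complex.I) -
      ∑ m ∈ Finset.range 3, (((t / √(L n) : ℝ) : ℂ) * Complex.I) ^ m / (m.factorial : ℂ) := by
      simp only [Finset.sum_range_succ, Finset.sum_range_zero, mul_pow, Complex.I_sq]
      norm_num [Nat.factorial]
      ring
    rw [norm_mul, e, Complex.norm_real, Real.norm_eq_abs]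
    have h0 : 0 < √(L n) := Real.sqrt_pos.2 hn
    have hmm : √(L n) * √(L n) = L n := Real.mul_self_sqrt hn.le
    calc _ ≤ |t / √(L n)| ^ 3 * 1 * |S n| := by
          gcongr
          refine hb.trans ?_
          gcongr
          norm_num [Nat.factorial]
      _ = |t| ^ 3 * (√(L n))⁻¹ * |S n / L n| := by
          rw [abs_div, abs_div, abs_of_pos h0, abs_of_pos hn]
          have e3 : |S n| / L n = |S n| / (√(L n) * √(L n)) := by rw [hmm]
          rw [e3]
          field_simp
  have h1 : Tendsto (fun n => ((t * ((S n - L n) / √(L n)) : ℝ) : ℂ) * Complex.I) atTop (nhds 0) := by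
    have := (Complex.continuous_ofReal.tendsto _).comp (hS.const_mul t)
    simpa using this.mul_const Complex.I
  have h2 : Tendsto (fun n => ((-t ^ 2 * (S n / L n) / 2 : ℝ) : ℂ)) atTop (nhds (-t ^ 2 / 2)) := by
    have := (Complex.continuous_ofReal.tendsto _).comp ((hSL.const_mul (-t ^ 2)).div_const 2)
    simpa [Function.comp_def] using this
  have := (h1.add hrem).add h2
  simp only [zero_add] at this
  refine this.congr' ?_
  filter_upwards [hL.eventually_gt_atTop 0] with n hn
  have h0 : 0 < √(L n) := Real.sqrt_pos.2 hn
  have hmm : (√(L n)) ^ 2 = L n := Real.sq_sqrt hn.le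
  have hc : ((-t ^ 2 * (S n / L n) / 2 : ℝ) : ℂ) = - (((t / √(L n) : ℝ) : ℂ) ^ 2 / 2 * S n) := by
    rw [← Complex.ofReal_pow, div_pow, hmm]; push_cast; ring
  rw [hc]
  push_cast
  ring

lemma ek_char (t : ℝ) : Tendsto (fun n : ℕ => (∑ m ∈ Finset.Icc 1 n,
      Complex.exp (t * (((m.primeFactors.card : ℝ) - Real.log (Real.log n)) /
        √(Real.log (Real.log n)) : ℝ) * Complex.I)) / n) atTop (nhds (Complex.exp (-t ^ 2 / 2))) := by
  obtain ⟨N, k, hN, hk, h1, h2, h3⟩ := ek_params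
  obtain ⟨C, hC, hprod⟩ := ek_prod_exp
  set L : ℕ → ℝ := fun n => Real.log (Real.log n) with hL
  have hLt : Tendsto L atTop atTop := ek_loglog
  have hlim := ek_exp_lim t L (fun n => ekS (N n)) hLt h1
  have hsq : Tendsto (fun n => √(L n)) atTop atTop := Real.tendsto_sqrt_atTop.comp hLt
  have hinv : Tendsto (fun n => (√(L n))⁻¹) atTop (nhds 0) := tendsto_inv_atTop_zero.comp hsq
  have hτ : Tendsto (fun n => t / √(L n)) atTop (nhds 0) := by
    simpa [div_eq_mul_inv] using hinv.const_mul t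
  have hE : Tendsto (fun n => Real.exp (2 * Real.exp 1 * |t| * √(L n) - L n)) atTop (nhds 0) := by
    refine Real.tendsto_exp_atBot.comp ?_
    have hx : Tendsto (fun x : ℝ => (2 * Real.exp 1 * |t| - x) * x) atTop atBot :=
      Tendsto.atBot_mul_atTop₀ (tendsto_atBot_add_const_left _ _ tendsto_neg_atTop_atBot) tendsto_id
    refine (hx.comp hsq).congr' ?_
    filter_upwards [hLt.eventually_gt_atTop 0] with n hn
    have hmm : √(L n) * √(L n) = L n := Real.mul_self_sqrt hn.le
    simp only [Function.comp]
    rw [sub_mul, hmm]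
  have hbound : Tendsto (fun n => |t| * ((ekS n - ekS (N n)) / √(L n)) +
      (2 * Real.exp (2 * Real.exp 1 * |t| * √(L n) - L n) + Real.exp 2 * (((N n : ℝ) ^ k n) / n)) +
      C * (t / √(L n)) ^ 2) atTop (nhds 0) := by
    have := ((h2.const_mul |t|).add ((hE.const_mul 2).add (h3.const_mul (Real.exp 2)))).add
      ((hτ.pow 2).const_mul C)
    simpa using this
  have hdiff := squeeze_zero_norm' (f := fun n : ℕ => (∑ m ∈ Finset.Icc 1 n,
      Complex.exp (t * (((m.primeFactors.card : ℝ) - L n) / √(L n) : ℝ) * Complex.I)) / n -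
      Complex.exp (-((t / √(L n) : ℝ) * L n * Complex.I) +
      (Complex.exp ((t / √(L n) : ℝ) * Complex.I) - 1) * ekS (N n))) ?_ hbound
  · simpa using hdiff.add hlim
  have hS2 : ∀ᶠ n in atTop, ekS (N n) ≤ 2 * L n := by
    filter_upwards [h1.eventually_le_const (by norm_num : (0:ℝ) < 1), hLt.eventually_ge_atTop 1] with n hn hn1
    have h0 : 0 < √(L n) := Real.sqrt_pos.2 (by linarith)
    rw [div_le_one h0] at hn
    have : √(L n) ≤ L n := by
      rw [Real.sqrt_le_left (by linarith)]; nlinarith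
    change ekS (N n) - L n ≤ √(L n) at hn
    linarith
  filter_upwards [hN, hS2, hLt.eventually_gt_atTop 0, eventually_ge_atTop 1,
    hτ.abs.eventually_le_const (by simp : |(0:ℝ)| < 1)] with n ⟨hN1, hNn⟩ hS2 hL0 hn1 hτ1
  have h0 : 0 < √(L n) := Real.sqrt_pos.2 hL0
  have hmm : √(L n) * √(L n) = L n := Real.mul_self_sqrt hL0.le
  set τ := t / √(L n) with hτd
  have hτabs : |τ| = |t| / √(L n) := by rw [hτd, abs_div, abs_of_pos h0]
  set z := Complex.exp (τ * Complex.I) - 1 with hz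
  have hz1 : 1 + z = Complex.exp (τ * Complex.I) := by rw [hz]; ring
  have hzn : ‖1 + z‖ ≤ 1 := by rw [hz1, Complex.norm_exp_ofReal_mul_I]
  have hzτ : ‖z‖ ≤ |τ| := by
    have := Real.norm_exp_I_mul_ofReal_sub_one_le (x := τ)
    rwa [mul_comm Complex.I] at this
  set c := Complex.exp (-(τ * L n * Complex.I)) with hc
  have hcn : ‖c‖ = 1 := by
    have : -((τ:ℂ) * L n * Complex.I) = ((-(τ * L n) : ℝ) : ℂ) * Complex.I := by push_cast; ring
    rw [hc, this, Complex.norm_exp_ofReal_mul_I]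
  have hsumc : (∑ m ∈ Finset.Icc 1 n,
      Complex.exp (t * (((m.primeFactors.card : ℝ) - L n) / √(L n) : ℝ) * Complex.I)) / n =
      c * ((∑ m ∈ Finset.Icc 1 n, Complex.exp (τ * Complex.I) ^ m.primeFactors.card) / n) := by
    rw [← mul_div_assoc, Finset.mul_sum]
    congr 1
    refine Finset.sum_congr rfl fun m _ => ?_
    rw [hc, ← Complex.exp_nat_mul, ← Complex.exp_add]
    congr 1
    rw [hτd]
    push_cast
    ring
  rw [hsumc, Complex.exp_add, ← hc, ← mul_sub, norm_mul, hcn, one_mul]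
  have b1 := ek_trunc n (N n) hn1 hNn τ
  have hcard : (Nat.primesLE (N n)).card ≤ N n := by
    rw [Nat.primesLE_eq_filter_Icc_one]
    exact (Finset.card_filter_le _ _).trans (by simp)
  have b2 := ek_comb n (N n) (k n) hn1 hN1 (Nat.primesLE (N n))
    (fun p hp => Nat.prime_of_mem_primesLE hp) hcard z hzn
  rw [hz1] at b2
  have b3 := hprod (N n) z hzn (hzτ.trans hτ1)
  have b2' : Real.exp (Real.exp 1 * ‖z‖ * (∑ p ∈ Nat.primesLE (N n), 1 / (p : ℝ)) - k n) ≤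
      Real.exp (2 * Real.exp 1 * |t| * √(L n) - L n) := by
    apply Real.exp_le_exp.2
    apply sub_le_sub _ (hk n)
    change Real.exp 1 * ‖z‖ * ekS (N n) ≤ _
    calc Real.exp 1 * ‖z‖ * ekS (N n) ≤ Real.exp 1 * |τ| * (2 * L n) := by
          have : 0 ≤ ekS (N n) := Finset.sum_nonneg fun _ _ => by positivity
          gcongr
      _ = _ := by
        rw [hτabs]
        have e4 : L n / √(L n) = √(L n) := Real.div_sqrt
        calc _ = 2 * Real.exp 1 * |t| * (L n / √(L n)) := by ring
          _ = _ := by rw [e4]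
  have b3' : C * ‖z‖ ^ 2 ≤ C * τ ^ 2 := by
    rw [← sq_abs τ]; gcongr
  have b1' : |τ| * (ekS n - ekS (N n)) = |t| * ((ekS n - ekS (N n)) / √(L n)) := by
    rw [hτabs]; ring
  have b2'' : Real.exp 2 * (N n : ℝ) ^ k n / n = Real.exp 2 * (((N n : ℝ) ^ k n) / n) := by ring
  refine (norm_sub_le_norm_sub_add_norm_sub _ _ _).trans
    (add_le_add ((norm_sub_le_norm_sub_add_norm_sub _ _ _).trans (add_le_add b1 b2)) b3) |>.trans ?_
  rw [b1', b2'']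
  gcongr

/-- Erdős–Kac theorem: the proportion of `m ≤ n` with
`ω(m) - ln ln n ≤ x·√(ln ln n)` tends to `Φ(x)`. -/
theorem erdos_kac (x : ℝ) :
    Tendsto
      (fun n : ℕ =>
        (((Finset.Icc 1 n).filter (fun m =>
            (m.primeFactors.card : ℝ) - Real.log (Real.log n) ≤
              x * Real.sqrt (Real.log (Real.log n)))).card : ℝ) / n)
      atTop (nhds (stdNormalCDF x)) := by
  have h := ek_reduction (fun n m => ((m.primeFactors.card : ℝ) - Real.log (Real.log n)) /
        √(Real.log (Real.log n))) ek_char x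
  refine h.congr' ?_
  filter_upwards [ek_loglog.eventually_gt_atTop 0] with n hn
  have h0 : 0 < √(Real.log (Real.log n)) := Real.sqrt_pos.2 hn
  simp only [div_le_iff₀ h0]
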